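/- For integers m ≥ 3 and N ≥ m, one has Γ(2N + m) / Γ(N + 1)² ≤ (4^N · 2^m · e^{m²/(2N)} / √(2π)) · N^{m−1}. -/

import Mathlib

open Real

theorem aux_upper (k : ℕ) (hk : 2 ≤ k) :
    Real.Gamma (k : ℝ) ≤ √(2 * π) * ((k : ℝ) / Real.exp 1) ^ k := by
  obtain ⟨n, rfl⟩ : ∃ n, k = n + 1 := ⟨k - 1, by omega⟩
  have h1 : Stirling.stirlingSeq (n + 1) ≤ Real.exp 1 / √2 := by
    rw [← Stirling.stirlingSeq_one]
    exact Stirling.stirlingSeq'_antitone (Nat.zero_le n)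
  have hx : (2 : ℝ) ≤ ((n + 1 : ℕ) : ℝ) := by exact_mod_cast hk
  have hG : Real.Gamma ((n + 1 : ℕ) : ℝ) * ((n + 1 : ℕ) : ℝ) = ((n + 1).factorial : ℝ) := by
    rw [← Real.Gamma_nat_eq_factorial, Real.Gamma_add_one (by positivity), mul_comm]
  unfold Stirling.stirlingSeq at h1
  generalize ((n + 1 : ℕ) : ℝ) = x at *
  have hx0 : 0 < x := by linarith
  have hP : 0 < (x / Real.exp 1) ^ (n + 1) := by positivity
  rw [div_le_div_iff₀ (by positivity) (by positivity), Real.sqrt_mul (by norm_num)] at h1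
  have h2 : ((n + 1).factorial : ℝ) ≤ Real.exp 1 * √x * (x / Real.exp 1) ^ (n + 1) := by
    have : (0 : ℝ) < √2 := by positivity
    refine le_of_mul_le_mul_right ?_ this
    linarith
  have h3 : Real.exp 1 ≤ √(2 * π) * √x := by
    rw [← Real.sqrt_mul (by positivity)]
    apply Real.le_sqrt_of_sq_le
    nlinarith [Real.exp_one_lt_d9, Real.exp_pos 1, Real.pi_gt_three]
  refine le_of_mul_le_mul_right ?_ hx0
  rw [hG]
  refine h2.trans ?_
  calc _ ≤ √(2 * π) * √x * √x * (x / Real.exp 1) ^ (n + 1) := by gcongr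
    _ = √(2 * π) * (√x * √x) * (x / Real.exp 1) ^ (n + 1) := by ring
    _ = _ := by rw [Real.mul_self_sqrt hx0.le]; ring

theorem gamma_ratio_bound (m N : ℕ) (hm : 3 ≤ m) (hN : m ≤ N) :
    Real.Gamma (2 * N + m) / Real.Gamma (N + 1) ^ 2
      ≤ 4 ^ N * 2 ^ m * Real.exp ((m : ℝ) ^ 2 / (2 * N)) / Real.sqrt (2 * π) *
          (N : ℝ) ^ (m - 1) := by
  have hu := aux_upper (2 * N + m) (by omega)
  have hl := Stirling.le_factorial_stirling N
  rw [← Real.Gamma_nat_eq_factorial] at hl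
  push_cast at hu
  have hx0 : (0 : ℝ) < N := by exact_mod_cast (by omega : 0 < N)
  have hpi := Real.pi_pos
  have hE : Real.exp 1 ≠ 0 := (Real.exp_pos 1).ne'
  have hK : ((2 * (N : ℝ) + m) / Real.exp 1) ^ (2 * N + m)
      ≤ (2 * (N : ℝ)) ^ (2 * N + m) * Real.exp ((m : ℝ) ^ 2 / (2 * N))
        / Real.exp 1 ^ (2 * N) := by
    have h1 : (2 * (N : ℝ) + m) ≤ 2 * N * Real.exp (m / (2 * N)) := by
      have := Real.add_one_le_exp ((m : ℝ) / (2 * N))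
      calc (2 * (N : ℝ) + m) = 2 * N * (m / (2 * N) + 1) := by field_simp; ring
        _ ≤ _ := by gcongr
    have h2 : Real.exp ((m : ℝ) / (2 * N)) ^ (2 * N + m)
        = Real.exp 1 ^ m * Real.exp ((m : ℝ) ^ 2 / (2 * N)) := by
      rw [← Real.exp_nat_mul, ← Real.exp_nat_mul, ← Real.exp_add]
      congr 1
      push_cast
      field_simp
    calc _ ≤ ((2 * N * Real.exp (m / (2 * N))) / Real.exp 1) ^ (2 * N + m) := by gcongr
      _ = _ := by
        rw [div_pow, mul_pow, h2, pow_add (Real.exp 1)]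
        field_simp
  have hl2 : 2 * π * N * ((N : ℝ) ^ (2 * N) / Real.exp 1 ^ (2 * N))
      ≤ Real.Gamma (N + 1) ^ 2 := by
    calc _ = (√(2 * π * N) * (N / Real.exp 1) ^ N) ^ 2 := by
          rw [mul_pow, Real.sq_sqrt (by positivity), ← pow_mul, div_pow, mul_comm N 2]
      _ ≤ _ := by gcongr
  have hs : √(2 * π) * √(2 * π) = 2 * π := Real.mul_self_sqrt (by positivity)
  have hs0 : 0 < √(2 * π) := by positivity
  have hG : 0 < Real.Gamma ((N : ℝ) + 1) := Real.Gamma_pos_of_pos (by positivity)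
  rw [div_le_iff₀ (by positivity)]
  refine hu.trans ?_
  refine (mul_le_mul_of_nonneg_left hK hs0.le).trans ?_
  refine le_trans (le_of_eq ?_) (mul_le_mul_of_nonneg_left hl2 (by positivity))
  obtain ⟨j, rfl⟩ : ∃ j, m = j + 1 := ⟨m - 1, by omega⟩
  rw [← hs, mul_pow, pow_add 2 (2 * N), pow_mul 2 2 N, Nat.add_sub_cancel,
    show 2 * N + (j + 1) = 2 * N + j + 1 from rfl, pow_succ (N : ℝ), pow_add (N : ℝ)]
  generalize Real.exp _ = y
  field_simp
  norm_num
  ring
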